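/- Let 𝒜 be a finite action set, a* ∈ 𝒜, and let the comparator policy π* be the point mass at a*. Assume the mixture-of-reference-policies model, and let τ* ∈ 𝒯 maximize π^τ(a*) over τ ∈ 𝒯. Consider any sequential sample-and-evaluate algorithm with budget n whose i-th sampling distribution is π_LLM(· | h_i) for some history h_i (hence, a convex combination of the reference policies {π^τ}), and whose output â always lies among the sampled actions a₁, …, a_n. For any 0 < ε < 1, if n < M^ε_{π*, π^{τ*}}, then there exists a reward function r : 𝒜 → [−1, 1] such that the regret of the algorithm's output with respect to π* exceeds ε. -/

import Mathlib

open Finset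

/-- The `E_M`-divergence between two policies on a finite action set. -/
noncomputable def EMdiv {A : Type*} [Fintype A] (p q : A → ℝ) (M : ℝ) : ℝ :=
  ∑ a, max 0 (p a - M * q a)

/-- The rejection threshold `M^ε_{p,q}`: the smallest `M` with `E_M(p,q) ≤ ε`. -/
noncomputable def Meps {A : Type*} [Fintype A] (p q : A → ℝ) (ε : ℝ) : ℝ :=
  sInf {M : ℝ | EMdiv p q M ≤ ε}

/-- A policy on a finite action set is a probability mass function. -/
def IsPolicy {A : Type*} [Fintype A] (p : A → ℝ) : Prop :=
  (∀ a, 0 ≤ p a) ∧ ∑ a, p a = 1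

/-- Posterior weight of the reference index `τ` given a history `h`. -/
noncomputable def postW {T A : Type*} [Fintype T] (pref : T → ℝ) (pit : T → A → ℝ)
    (h : List A) (τ : T) : ℝ :=
  pref τ * (h.map (pit τ)).prod / ∑ τ', pref τ' * (h.map (pit τ')).prod

/-- The posterior-predictive policy `π_LLM(· | h)` of the mixture-of-reference-policies model. -/
noncomputable def piLLM {T A : Type*} [Fintype T] (pref : T → ℝ) (pit : T → A → ℝ)
    (h : List A) (a : A) : ℝ :=
  ∑ τ, pit τ a * postW pref pit h τ

/-- The point mass at `astar`. -/
def pointMass {A : Type*} [DecidableEq A] (astar : A) : A → ℝ :=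
  fun a => if a = astar then 1 else 0

/-- Probability that a sequential sample-and-evaluate algorithm with (adaptive)
sampling policies `p i prev` draws the trajectory `v`. -/
noncomputable def trajProb {A : Type*} (p : ℕ → List A → A → ℝ) (n : ℕ) (v : Fin n → A) : ℝ :=
  ∏ i : Fin n, p i.1 ((List.ofFn v).take i.1) (v i)

/-!
Reward only `a*`, that is, take `r = π*`. The output lies among the samples, so its expected reward
is at most the expected number of draws of `a*`. A mixture of the reference policies puts mass at
most `π^{τ*}(a*)` on `a*`, so this number is at most `n π^{τ*}(a*)`. On the other hand
`E_M(π*, π^{τ*}) = max {0, 1 - M π^{τ*}(a*)}`, so `n < M^ε_{π*, π^{τ*}}` says that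
`1 - n π^{τ*}(a*) > ε`, and the left-hand side bounds the regret from below.
-/

/-- A sub-probability mass function. Posterior weights and `piLLM` are only of this kind: on a
history of evidence zero they vanish identically, because `x / 0 = 0`. -/
structure IsSubpolicy {A : Type*} [Fintype A] (w : A → ℝ) : Prop where
  nonneg (a : A) : 0 ≤ w a
  sum_le_one : ∑ a, w a ≤ 1

theorem IsPolicy.isSubpolicy {A : Type*} [Fintype A] {w : A → ℝ} (hw : IsPolicy w) :
    IsSubpolicy w :=
  ⟨hw.1, hw.2.le⟩

theorem IsSubpolicy.sum_mul_le {A : Type*} [Fintype A] {w f : A → ℝ} {c : ℝ}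
    (hw : IsSubpolicy w) (hc : 0 ≤ c) (hf : ∀ a, f a ≤ c) : ∑ a, w a * f a ≤ c :=
  calc ∑ a, w a * f a ≤ ∑ a, w a * c :=
        sum_le_sum fun a _ => mul_le_mul_of_nonneg_left (hf a) (hw.nonneg a)
    _ = (∑ a, w a) * c := (sum_mul ..).symm
    _ ≤ c := mul_le_of_le_one_left hc hw.sum_le_one

section Mixture

variable {T A : Type*} [Fintype T] {pref : T → ℝ} {pit : T → A → ℝ}

theorem isSubpolicy_postW (hpref : ∀ τ, 0 ≤ pref τ) (hpit : ∀ τ a, 0 ≤ pit τ a) (h : List A) :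
    IsSubpolicy (postW pref pit h) := by
  have joint_nonneg (τ : T) : 0 ≤ pref τ * (h.map (pit τ)).prod :=
    mul_nonneg (hpref τ) (List.prod_nonneg (List.forall_mem_map.2 fun a _ => hpit τ a))
  refine ⟨fun τ => div_nonneg (joint_nonneg τ) (sum_nonneg fun τ' _ => joint_nonneg τ'), ?_⟩
  simp only [postW, ← sum_div]
  exact div_self_le_one _

theorem piLLM_le (hpref : ∀ τ, 0 ≤ pref τ) (hpit : ∀ τ a, 0 ≤ pit τ a) (h : List A) {a : A}
    {c : ℝ} (hc : 0 ≤ c) (hle : ∀ τ, pit τ a ≤ c) : piLLM pref pit h a ≤ c := by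
  simpa only [piLLM, mul_comm] using (isSubpolicy_postW hpref hpit h).sum_mul_le hc hle

theorem isSubpolicy_piLLM [Fintype A] (hpref : ∀ τ, 0 ≤ pref τ)
    (hpit : ∀ τ, IsSubpolicy (pit τ)) (h : List A) : IsSubpolicy (piLLM pref pit h) := by
  have hw := isSubpolicy_postW hpref (fun τ => (hpit τ).nonneg) h
  refine ⟨fun a => sum_nonneg fun τ _ => mul_nonneg ((hpit τ).nonneg a) (hw.nonneg τ), ?_⟩
  calc ∑ a, piLLM pref pit h a = ∑ τ, postW pref pit h τ * ∑ a, pit τ a := by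
        simp only [piLLM, mul_sum, mul_comm (pit _ _)]
        exact sum_comm
    _ ≤ 1 := hw.sum_mul_le zero_le_one fun τ => (hpit τ).sum_le_one

end Mixture

section Trajectory

variable {A : Type*} {p : ℕ → List A → A → ℝ}

theorem trajProb_snoc {n : ℕ} (v : Fin n → A) (a : A) :
    trajProb p (n + 1) (Fin.snoc v a : Fin (n + 1) → A) = trajProb p n v * p n (List.ofFn v) a := by
  have ofFn_snoc : List.ofFn (Fin.snoc v a : Fin (n + 1) → A) = List.ofFn v ++ [a] := by
    simp only [List.ofFn_succ', Fin.snoc_castSucc, Fin.snoc_last, List.concat_eq_append]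
  have take_snoc {i : ℕ} (hi : i ≤ n) : (List.ofFn v ++ [a]).take i = (List.ofFn v).take i :=
    List.take_append_of_le_length (by rwa [List.length_ofFn])
  have take_all : (List.ofFn v).take n = List.ofFn v :=
    List.take_of_length_le List.length_ofFn.le
  simp only [trajProb, Fin.prod_univ_castSucc, ofFn_snoc, Fin.snoc_castSucc, Fin.snoc_last,
    Fin.val_castSucc, Fin.val_last, take_snoc Fin.is_le', take_snoc le_rfl, take_all]

theorem trajProb_nonneg (hp : ∀ i l a, 0 ≤ p i l a) {n : ℕ} (v : Fin n → A) :
    0 ≤ trajProb p n v :=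
  prod_nonneg fun _ _ => hp _ _ _

variable [Fintype A]

theorem sum_trajProb_succ_mul {n : ℕ} (F : (Fin (n + 1) → A) → ℝ) :
    ∑ v, trajProb p (n + 1) v * F v =
      ∑ v, trajProb p n v * ∑ a, p n (List.ofFn v) a * F (Fin.snoc v a) := by
  simp only [mul_sum, ← mul_assoc, ← trajProb_snoc]
  rw [← (Fin.snocEquiv fun _ : Fin (n + 1) => A).sum_comp, Fintype.sum_prod_type, sum_comm]
  rfl

theorem isSubpolicy_trajProb (hp : ∀ i l, IsSubpolicy (p i l)) (n : ℕ) :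
    IsSubpolicy (trajProb p n) := by
  refine ⟨trajProb_nonneg fun i l => (hp i l).nonneg, ?_⟩
  induction n with
  | zero => simp [trajProb]
  | succ n ih =>
    have ih_sub : IsSubpolicy (trajProb p n) := ⟨trajProb_nonneg fun i l => (hp i l).nonneg, ih⟩
    calc ∑ v, trajProb p (n + 1) v = ∑ v, trajProb p n v * ∑ a, p n (List.ofFn v) a := by
          simpa only [mul_one] using sum_trajProb_succ_mul (p := p) fun _ => 1
      _ ≤ 1 := ih_sub.sum_mul_le zero_le_one fun v => (hp n (List.ofFn v)).sum_le_one

variable {f : A → ℝ} {c : ℝ}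

theorem sum_trajProb_mul_sum_le (hp : ∀ i l, IsSubpolicy (p i l)) (hf : ∀ a, 0 ≤ f a)
    (hc : ∀ i l, ∑ a, p i l a * f a ≤ c) (n : ℕ) :
    ∑ v, trajProb p n v * ∑ i, f (v i) ≤ n * c := by
  induction n with
  | zero => simp
  | succ n ih =>
    have hc0 : 0 ≤ c :=
      (sum_nonneg fun a _ => mul_nonneg ((hp 0 []).nonneg a) (hf a)).trans (hc 0 [])
    have last_draw (v : Fin n → A) :
        ∑ a, p n (List.ofFn v) a * ∑ i, f ((Fin.snoc v a : Fin (n + 1) → A) i) ≤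
          ∑ i, f (v i) + c := by
      simp only [Fin.sum_univ_castSucc, Fin.snoc_castSucc, Fin.snoc_last, mul_add,
        sum_add_distrib]
      exact add_le_add ((hp _ _).sum_mul_le (sum_nonneg fun i _ => hf _) fun _ => le_rfl) (hc _ _)
    have hT := isSubpolicy_trajProb hp n
    calc ∑ v, trajProb p (n + 1) v * ∑ i, f (v i)
        ≤ ∑ v, trajProb p n v * (∑ i, f (v i) + c) := by
          rw [sum_trajProb_succ_mul]
          exact sum_le_sum fun v _ => mul_le_mul_of_nonneg_left (last_draw v) (hT.nonneg v)
      _ = ∑ v, trajProb p n v * ∑ i, f (v i) + ∑ v, trajProb p n v * c := by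
          simp only [mul_add, sum_add_distrib]
      _ ≤ n * c + c := add_le_add ih (hT.sum_mul_le hc0 fun _ => le_rfl)
      _ = (n + 1 : ℕ) * c := by push_cast; ring

theorem sum_trajProb_mul_sel_le (hp : ∀ i l, IsSubpolicy (p i l)) (hf : ∀ a, 0 ≤ f a)
    (hc : ∀ i l, ∑ a, p i l a * f a ≤ c) {n : ℕ} {sel : (Fin n → A) → A}
    (hsel : ∀ v, ∃ i, sel v = v i) : ∑ v, trajProb p n v * f (sel v) ≤ n * c := by
  have sel_le_sum (v : Fin n → A) : f (sel v) ≤ ∑ i, f (v i) := by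
    obtain ⟨i, hi⟩ := hsel v
    exact hi ▸ single_le_sum (f := fun i => f (v i)) (fun i _ => hf _) (mem_univ i)
  exact (sum_le_sum fun v _ => mul_le_mul_of_nonneg_left (sel_le_sum v)
    (trajProb_nonneg (fun i l => (hp i l).nonneg) v)).trans (sum_trajProb_mul_sum_le hp hf hc n)

end Trajectory

theorem lt_EMdiv_of_lt_Meps {A : Type*} [Fintype A] {p q : A → ℝ} {M ε : ℝ} (hM : 0 ≤ M)
    (h : M < Meps p q ε) : ε < EMdiv p q M := by
  contrapose! h
  by_cases hbdd : BddBelow {M : ℝ | EMdiv p q M ≤ ε}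
  · exact csInf_le hbdd h
  · -- `sInf` of a set of reals that is not bounded below is `0`.
    exact (Real.sInf_of_not_bddBelow hbdd).trans_le hM

section PointMass

variable {A : Type*} [DecidableEq A] {s : A}

theorem pointMass_self : pointMass s s = 1 := if_pos rfl

theorem pointMass_of_ne {a : A} (h : a ≠ s) : pointMass s a = 0 := if_neg h

theorem pointMass_mem_Icc (a : A) : pointMass s a ∈ Set.Icc (0 : ℝ) 1 := by
  unfold pointMass
  split_ifs <;> simp

variable [Fintype A]

theorem sum_mul_pointMass (w : A → ℝ) : ∑ a, w a * pointMass s a = w s := by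
  simp [pointMass]

theorem EMdiv_pointMass {q : A → ℝ} (hq : ∀ a, 0 ≤ q a) {M : ℝ} (hM : 0 ≤ M) :
    EMdiv (pointMass s) q M = max 0 (1 - M * q s) := by
  have off_support (a : A) (ha : a ≠ s) : max 0 (pointMass s a - M * q a) = 0 := by
    rw [pointMass_of_ne ha, zero_sub]
    exact max_eq_left (neg_nonpos.2 (mul_nonneg hM (hq a)))
  rw [EMdiv, Fintype.sum_eq_single s off_support, pointMass_self]

theorem lt_one_sub_mul_of_lt_Meps {q : A → ℝ} (hq : ∀ a, 0 ≤ q a) {M ε : ℝ} (hM : 0 ≤ M)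
    (hε : 0 ≤ ε) (h : M < Meps (pointMass s) q ε) : ε < 1 - M * q s := by
  have hlt := lt_EMdiv_of_lt_Meps hM h
  rw [EMdiv_pointMass hq hM] at hlt
  exact (lt_max_iff.1 hlt).resolve_left hε.not_gt

end PointMass

theorem stmt5_general {A : Type*} [Fintype A] [DecidableEq A] {astar : A} {q : A → ℝ}
    (hq : ∀ a, 0 ≤ q a) {n : ℕ} {p : ℕ → List A → A → ℝ}
    (hp : ∀ i prev, IsSubpolicy (p i prev)) (hpq : ∀ i prev, p i prev astar ≤ q astar)
    {sel : (Fin n → A) → A} (hsel : ∀ v, ∃ i, sel v = v i) {ε : ℝ} (hε : 0 ≤ ε)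
    (hn : (n : ℝ) < Meps (pointMass astar) q ε) :
    ∃ r : A → ℝ, (∀ a, -1 ≤ r a ∧ r a ≤ 1) ∧
      ε < r astar - ∑ v : Fin n → A, trajProb p n v * r (sel v) := by
  have hr (a : A) := pointMass_mem_Icc (s := astar) a
  refine ⟨pointMass astar, fun a => ⟨neg_one_lt_zero.le.trans (hr a).1, (hr a).2⟩, ?_⟩
  have reward_le : ∑ v, trajProb p n v * pointMass astar (sel v) ≤ n * q astar :=
    sum_trajProb_mul_sel_le hp (fun a => (hr a).1)
      (fun i prev => (sum_mul_pointMass _).trans_le (hpq i prev)) hsel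
  calc ε < 1 - n * q astar := lt_one_sub_mul_of_lt_Meps hq n.cast_nonneg hε hn
    _ ≤ _ := by rw [pointMass_self]; exact sub_le_sub_left reward_le 1

/-- lower bound for sequential sample-and-evaluate algorithms in the
mixture-of-reference-policies model.  If each sampling distribution is `π_LLM(·|h)`
for some history `h`, the output always lies among the samples, and
`n < M^ε_{π*, π^{τ*}}` (with `π* = δ_{a*}` and `τ*` the index maximizing `π^τ(a*)`),
then some reward `r : A → [−1,1]` forces regret `> ε`. -/
theorem stmt5 {A : Type*} [Fintype A] [DecidableEq A] {T : Type*} [Fintype T]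
    (pref : T → ℝ) (hpref0 : ∀ τ, 0 < pref τ) (hpref1 : ∑ τ, pref τ = 1)
    (pit : T → A → ℝ) (hpit : ∀ τ, IsPolicy (pit τ))
    (astar : A) (τs : T) (hτs : ∀ τ, pit τ astar ≤ pit τs astar)
    (n : ℕ)
    (p : ℕ → List A → A → ℝ)
    (hpLLM : ∀ (i : ℕ) (prev : List A), ∃ h : List A, p i prev = piLLM pref pit h)
    (sel : (Fin n → A) → A) (hsel : ∀ v : Fin n → A, ∃ i, sel v = v i)
    (ε : ℝ) (hε0 : 0 < ε) (hε1 : ε < 1)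
    (hn : (n : ℝ) < Meps (pointMass astar) (pit τs) ε) :
    ∃ r : A → ℝ, (∀ a, -1 ≤ r a ∧ r a ≤ 1) ∧
      ε < r astar - ∑ v : Fin n → A, trajProb p n v * r (sel v) := by
  choose h hp using hpLLM
  have hpref (τ : T) : 0 ≤ pref τ := (hpref0 τ).le
  exact stmt5_general (hpit τs).1
    (fun i prev => hp i prev ▸ isSubpolicy_piLLM hpref (fun τ => (hpit τ).isSubpolicy) _)
    (fun i prev => hp i prev ▸ piLLM_le hpref (fun τ => (hpit τ).1) _ ((hpit τs).1 _) hτs)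
    hsel hε0.le hn
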